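/- arXiv:2303.12444 — 4 statements merged into one kernel-verified Lean document; each statement's English description precedes it below -/
import Mathlib

section
/- Let M be a finite set of items, v : 2^M → ℝ≥0 a valuation, n ≥ 1 an integer, and let 0 ≤ t ≤ MMS_n(v, M). Define the truncated valuation v^t by v^t(S) := min(v(S), t) for all S ⊆ M. Then MMS_n(v^t, M) = t. -/
/-!
There are only finitely many partitions of `M` into `n` bundles and at least one, so the supremum
defining `MMS n v M` is attained, by a partition all of whose bundles are worth at least `t`.
Under the truncated valuation each bundle of this partition is worth exactly `t`, and no partition
can have a minimum above `t`.
-/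

open Finset

/-- The maximin share of an agent with valuation `v` among `n` agents with equal
entitlements, on the set `M` of items: the supremum over all partitions of `M`
into `n` pairwise disjoint bundles of the minimum value of a bundle. -/
noncomputable def MMS {ι : Type*} [DecidableEq ι] (n : ℕ) (v : Finset ι → ℝ)
    (M : Finset ι) : ℝ :=
  sSup {z : ℝ | ∃ B : Fin n → Finset ι,
    (∀ i j, i ≠ j → Disjoint (B i) (B j)) ∧
    (Finset.univ.biUnion B = M) ∧
    z = ⨅ i, v (B i)}

/-- The set of minimum bundle values over which `MMS` takes the supremum is finite: every bundle of
a partition lies in the powerset of `M`. -/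
lemma MMS_set_finite {ι : Type*} [DecidableEq ι] (n : ℕ) (v : Finset ι → ℝ) (M : Finset ι) :
    {z : ℝ | ∃ B : Fin n → Finset ι,
      (∀ i j, i ≠ j → Disjoint (B i) (B j)) ∧
      (Finset.univ.biUnion B = M) ∧
      z = ⨅ i, v (B i)}.Finite := by
  have hfin : (Set.pi Set.univ fun _ : Fin n => (M.powerset : Set (Finset ι))).Finite :=
    Set.Finite.pi fun _ => M.powerset.finite_toSet
  refine (hfin.image fun B => ⨅ i, v (B i)).subset ?_
  rintro z ⟨B, -, hB, rfl⟩
  refine ⟨B, fun i _ => ?_, rfl⟩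
  change B i ∈ (M.powerset : Set (Finset ι))
  rw [mem_coe, mem_powerset, ← hB]
  exact subset_biUnion_of_mem B (mem_univ i)

/-- For `n ≥ 1` a partition exists: all items go to one bundle. -/
lemma MMS_set_nonempty {ι : Type*} [DecidableEq ι] (n : ℕ) (hn : 1 ≤ n) (v : Finset ι → ℝ)
    (M : Finset ι) :
    {z : ℝ | ∃ B : Fin n → Finset ι,
      (∀ i j, i ≠ j → Disjoint (B i) (B j)) ∧
      (Finset.univ.biUnion B = M) ∧
      z = ⨅ i, v (B i)}.Nonempty := by
  refine ⟨_, fun i => if i = ⟨0, hn⟩ then M else ∅, fun i j hij => ?_, ?_, rfl⟩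
  · by_cases hi : i = ⟨0, hn⟩
    · have hj : j ≠ ⟨0, hn⟩ := fun h => hij (hi.trans h.symm)
      simp [hj]
    · simp [hi]
  · ext x
    simp only [mem_biUnion, mem_univ, true_and]
    constructor
    · rintro ⟨i, hi⟩
      split_ifs at hi
      · exact hi
      · simp at hi
    · exact fun hx => ⟨⟨0, hn⟩, by simpa using hx⟩

theorem MMS_truncation
    {ι : Type*} [DecidableEq ι] (M : Finset ι) (v : Finset ι → ℝ)
    (hnonneg : ∀ S ⊆ M, 0 ≤ v S)
    (n : ℕ) (hn : 1 ≤ n) (t : ℝ) (ht0 : 0 ≤ t) (ht : t ≤ MMS n v M) :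
    MMS n (fun S => min (v S) t) M = t := by
  have : Nonempty (Fin n) := ⟨⟨0, hn⟩⟩
  obtain ⟨B, hdisj, hunion, hmax⟩ := (MMS_set_nonempty n hn v M).csSup_mem (MMS_set_finite n v M)
  have hB : ∀ i, t ≤ v (B i) := fun i =>
    (ht.trans hmax.le).trans (ciInf_le (Set.finite_range _).bddBelow i)
  apply le_antisymm
  · refine csSup_le (MMS_set_nonempty n hn (fun S => min (v S) t) M) ?_
    rintro z ⟨C, -, -, rfl⟩
    exact (ciInf_le (Set.finite_range _).bddBelow ⟨0, hn⟩).trans (min_le_right _ _)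
  · refine le_csSup (MMS_set_finite n (fun S => min (v S) t) M).bddAbove ⟨B, hdisj, hunion, ?_⟩
    simp [hB]
end

section
/- Let M be a finite set of items, v : 2^M → ℝ≥0 a valuation, b ∈ (0,1] an entitlement, and let 0 ≤ t ≤ APS(b, v, M). Define the truncated valuation v^t by v^t(S) := min(v(S), t) for all S ⊆ M. Then APS(b, v^t, M) = t. -/
/-! The truncated valuation never exceeds `t`, so a value `z > t` would force all weights to
vanish, contradicting total weight `1`; hence `t` bounds the truncated share from above.
Conversely, weights witnessing a value `z` for `v` also witness `min z t` for the truncation,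
since `min (v S) t < min z t` implies `v S < z`. Values `z` approximating `APS b v M ≥ t`
from below therefore give values of the truncated problem arbitrarily close to `t`, and it is
not necessary to know that the supremum is attained. -/

open Finset

/-- The anyprice share of an agent with entitlement `b` and valuation `v`
on the set `M` of items. -/
noncomputable def APS {ι : Type*} [DecidableEq ι] (b : ℝ) (v : Finset ι → ℝ)
    (M : Finset ι) : ℝ :=
  sSup {z : ℝ | 0 ≤ z ∧ ∃ lam : Finset ι → ℝ,
    (∀ S, 0 ≤ lam S) ∧
    (∑ S ∈ M.powerset, lam S) = 1 ∧
    (∀ S ∈ M.powerset, v S < z → lam S = 0) ∧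
    (∀ e ∈ M, (∑ S ∈ M.powerset.filter (fun S => e ∈ S), lam S) ≤ b)}

/-- Putting all the weight on the empty bundle witnesses the value `0`, so the supremum in `APS`
is over a nonempty set. -/
lemma APS_set_nonempty {ι : Type*} [DecidableEq ι] (M : Finset ι) (v : Finset ι → ℝ)
    (hnonneg : ∀ S ⊆ M, 0 ≤ v S) (b : ℝ) (hb0 : 0 < b) :
    {z : ℝ | 0 ≤ z ∧ ∃ lam : Finset ι → ℝ,
      (∀ S, 0 ≤ lam S) ∧
      (∑ S ∈ M.powerset, lam S) = 1 ∧
      (∀ S ∈ M.powerset, v S < z → lam S = 0) ∧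
      (∀ e ∈ M, (∑ S ∈ M.powerset.filter (fun S => e ∈ S), lam S) ≤ b)}.Nonempty := by
  refine ⟨0, le_rfl, fun S => if S = ∅ then 1 else 0, ?_, ?_, ?_, ?_⟩
  · intro S
    dsimp only
    split_ifs <;> norm_num
  · simp
  · intro S hS hlt
    exact absurd hlt (not_lt.mpr (hnonneg S (mem_powerset.mp hS)))
  · intro e _
    rw [sum_eq_zero]
    · exact hb0.le
    · intro S hS
      exact if_neg (ne_empty_of_mem (mem_filter.mp hS).2)

theorem APS_truncation
    {ι : Type*} [DecidableEq ι] (M : Finset ι) (v : Finset ι → ℝ)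
    (hnonneg : ∀ S ⊆ M, 0 ≤ v S)
    (b : ℝ) (hb0 : 0 < b) (hb1 : b ≤ 1)
    (t : ℝ) (ht0 : 0 ≤ t) (ht : t ≤ APS b v M) :
    APS b (fun S => min (v S) t) M = t := by
  unfold APS at ht ⊢
  apply csSup_eq_of_forall_le_of_forall_lt_exists_gt
  · exact APS_set_nonempty M _ (fun S hS => le_min (hnonneg S hS) ht0) b hb0
  · rintro z ⟨_, lam, _, hsum, hsupp, _⟩
    by_contra! hz
    rw [sum_eq_zero fun S hS => hsupp S hS ((min_le_right _ _).trans_lt hz)] at hsum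
    exact zero_ne_one hsum
  · intro w hw
    obtain ⟨z, ⟨hz0, lam, hlam, hsum, hsupp, hcap⟩, hwz⟩ :=
      exists_lt_of_lt_csSup (APS_set_nonempty M v hnonneg b hb0) (hw.trans_le ht)
    refine ⟨min z t, ⟨le_min hz0 ht0, lam, hlam, hsum, ?_, hcap⟩, lt_min hwz hw⟩
    intro S hS hlt
    refine hsupp S hS ?_
    by_contra! hvz
    exact absurd hlt (not_lt.mpr (min_le_min_right t hvz))
end

section
/- Let M be a finite set of items, v : 2^M → ℝ≥0 a normalized monotone submodular valuation, let C, O ⊆ M be disjoint sets, let b ≥ 0, and let (λ_S)_{S ⊆ M} be nonnegative weights with Σ_{S ⊆ M} λ_S = 1 and Σ_{S : e ∈ S} λ_S ≤ b for every e ∈ M. Then Σ_{S ⊆ M} λ_S · v(S) ≤ Σ_{S ⊆ M} λ_S · v((S \ O) \ C | C) + v(C) + b · Σ_{e ∈ O} v({e} | C). -/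
open Finset

/-!
For a fixed bundle `S`, monotonicity gives `v S ≤ v (((S \ O) \ C ∪ C) ∪ (S ∩ O))`, and adding the
items of `S ∩ O` one at a time to a superset of `C` costs, by submodularity, at most their
marginal values over `C` (`union_le_add_sum_marginal`). Hence
`v S ≤ v ((S \ O) \ C | C) + v C + ∑ e ∈ O, [e ∈ S] v ({e} | C)`. Averaging with the weights `lam` and
exchanging the two sums, each nonnegative marginal `v ({e} | C)` gets the total weight of the
bundles containing `e`, which is at most `b`.
-/

/-- Diminishing returns: joining `T` to a superset `A` of `C` gains at most the sum of the
single-item marginals over `C`. -/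
theorem union_le_add_sum_marginal
    {ι : Type*} [DecidableEq ι] {M : Finset ι} {v : Finset ι → ℝ}
    (hmono : ∀ S T : Finset ι, S ⊆ T → T ⊆ M → v S ≤ v T)
    (hsubmod : ∀ S T : Finset ι, S ⊆ M → T ⊆ M →
      v (S ∪ T) + v (S ∩ T) ≤ v S + v T)
    {A C : Finset ι} (hA : A ⊆ M) (hCA : C ⊆ A) (T : Finset ι) (hT : T ⊆ M) :
    v (A ∪ T) ≤ v A + ∑ e ∈ T, (v (C ∪ {e}) - v C) := by
  induction T using Finset.induction_on with
  | empty => simp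
  | insert e T he ih =>
    obtain ⟨heM, hTM⟩ := Finset.insert_subset_iff.mp hT
    have hAT : A ∪ T ⊆ M := Finset.union_subset hA hTM
    have hCe : C ∪ {e} ⊆ M :=
      Finset.union_subset (hCA.trans hA) (Finset.singleton_subset_iff.mpr heM)
    have h1 := hsubmod (A ∪ T) (C ∪ {e}) hAT hCe
    have h2 : v C ≤ v ((A ∪ T) ∩ (C ∪ {e})) :=
      hmono _ _ (Finset.subset_inter (hCA.trans Finset.subset_union_left)
        Finset.subset_union_left) (Finset.inter_subset_left.trans hAT)
    have h3 : A ∪ insert e T = (A ∪ T) ∪ (C ∪ {e}) := by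
      ext x
      have := @hCA x
      simp only [Finset.mem_union, Finset.mem_insert, Finset.mem_singleton]
      tauto
    rw [Finset.sum_insert he, h3]
    linarith [ih hTM]

theorem fractional_partition_marginal_bound
    {ι : Type*} [DecidableEq ι] (M : Finset ι) (v : Finset ι → ℝ)
    (hnorm : v ∅ = 0)
    (hnonneg : ∀ S ⊆ M, 0 ≤ v S)
    (hmono : ∀ S T : Finset ι, S ⊆ T → T ⊆ M → v S ≤ v T)
    (hsubmod : ∀ S T : Finset ι, S ⊆ M → T ⊆ M →
      v (S ∪ T) + v (S ∩ T) ≤ v S + v T)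
    (C O : Finset ι) (hC : C ⊆ M) (hO : O ⊆ M) (hCO : Disjoint C O)
    (b : ℝ) (hb : 0 ≤ b)
    (lam : Finset ι → ℝ)
    (hlam0 : ∀ S, 0 ≤ lam S)
    (hlam1 : (∑ S ∈ M.powerset, lam S) = 1)
    (hlamb : ∀ e ∈ M, (∑ S ∈ M.powerset.filter (fun S => e ∈ S), lam S) ≤ b) :
    (∑ S ∈ M.powerset, lam S * v S) ≤
      (∑ S ∈ M.powerset, lam S * (v (((S \ O) \ C) ∪ C) - v C)) + v C +
        b * ∑ e ∈ O, (v (C ∪ {e}) - v C) := by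
  have hpt : ∀ S ∈ M.powerset, lam S * v S ≤
      lam S * (v (((S \ O) \ C) ∪ C) - v C) + lam S * v C +
        ∑ e ∈ O, if e ∈ S then lam S * (v (C ∪ {e}) - v C) else 0 := by
    intro S hS
    have hSM : S ⊆ M := Finset.mem_powerset.mp hS
    have hA : ((S \ O) \ C) ∪ C ⊆ M :=
      Finset.union_subset ((Finset.sdiff_subset.trans Finset.sdiff_subset).trans hSM) hC
    have hT : O.filter (fun e => e ∈ S) ⊆ M := (Finset.filter_subset _ _).trans hO
    have h1 := union_le_add_sum_marginal hmono hsubmod hA Finset.subset_union_right _ hT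
    have h2 : v S ≤ v ((((S \ O) \ C) ∪ C) ∪ O.filter (fun e => e ∈ S)) := by
      refine hmono _ _ ?_ (Finset.union_subset hA hT)
      intro x hx
      simp only [Finset.mem_union, Finset.mem_sdiff, Finset.mem_filter]
      tauto
    rw [← Finset.sum_filter, ← Finset.mul_sum]
    have h3 := mul_le_mul_of_nonneg_left (h2.trans h1) (hlam0 S)
    linarith
  have hsum := Finset.sum_le_sum hpt
  rw [Finset.sum_add_distrib, Finset.sum_add_distrib, ← Finset.sum_mul, hlam1, one_mul,
    Finset.sum_comm] at hsum
  refine hsum.trans (add_le_add le_rfl ?_)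
  rw [Finset.mul_sum]
  refine Finset.sum_le_sum fun e he => ?_
  rw [← Finset.sum_filter, ← Finset.sum_mul]
  refine mul_le_mul_of_nonneg_right (hlamb e (hO he)) (sub_nonneg.mpr ?_)
  exact hmono _ _ Finset.subset_union_left
    (Finset.union_subset hC (Finset.singleton_subset_iff.mpr (hO he)))
end

section
/- Let M be a finite set of items, w : M → ℝ≥0, and let v be the unit-demand valuation v(S) = max_{e ∈ S} w(e) for S ≠ ∅ and v(∅) = 0. Let b ∈ (0,1] be an entitlement and set k := ⌈1/b⌉. If |M| ≥ k, then APS(b, v, M) equals the k-th largest value among {w(e) : e ∈ M} (counted with multiplicity); if |M| < k, then APS(b, v, M) = 0. -/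
/-!
A value `z > 0` is feasible in the definition of the anyprice share exactly when at least
`k = ⌈1/b⌉` items are worth at least `z`. Every bundle in the support must contain such an item, so
if there are `t` of them, the constraints `∑_{S ∋ e} λ_S ≤ b` give `1 ≤ t * b`, that is `k ≤ t`
(`card_le_of_feasible`). Conversely, the weight `1/k ≤ b` on each of `k` singletons of such items is
feasible (`feasible_of_card`). Since `z` is at most the `k`-th largest value iff at least `k` items
are worth at least `z` (`le_kth_largest_iff`), the `k`-th largest value is the greatest feasible
`z`. With fewer than `k` items only `z = 0` is feasible, with all the weight on the empty bundle.
-/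

open Finset

/-- The values `z` over which the supremum in `APS b v M` is taken. -/
def feasibleValues {ι : Type*} [DecidableEq ι] (b : ℝ) (v : Finset ι → ℝ) (M : Finset ι) : Set ℝ :=
  {z : ℝ | 0 ≤ z ∧ ∃ lam : Finset ι → ℝ,
    (∀ S, 0 ≤ lam S) ∧
    (∑ S ∈ M.powerset, lam S) = 1 ∧
    (∀ S ∈ M.powerset, v S < z → lam S = 0) ∧
    (∀ e ∈ M, (∑ S ∈ M.powerset.filter (fun S => e ∈ S), lam S) ≤ b)}

theorem zero_feasible {ι : Type*} [DecidableEq ι] (M : Finset ι) (v : Finset ι → ℝ)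
    (hv : ∀ S, 0 ≤ v S) (b : ℝ) (hb0 : 0 < b) : (0 : ℝ) ∈ feasibleValues b v M := by
  refine ⟨le_rfl, fun S => if S = ∅ then 1 else 0, ?_, ?_, ?_, ?_⟩
  · intro S
    dsimp only
    split_ifs <;> norm_num
  · simp
  · intro S _ h
    exact absurd h (not_lt.mpr (hv S))
  · intro e _
    rw [Finset.sum_eq_zero]
    · exact hb0.le
    · intro S hS
      have : S ≠ ∅ := Finset.ne_empty_of_mem (Finset.mem_filter.mp hS).2
      simp [this]

theorem card_le_of_feasible {ι : Type*} [DecidableEq ι] (M : Finset ι)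
    (w : ι → ℝ) (v : Finset ι → ℝ) (hv0 : v ∅ = 0)
    (hv : ∀ (S : Finset ι) (hS : S.Nonempty), v S = S.sup' hS w)
    (b : ℝ) (hb0 : 0 < b) {z : ℝ} (hz : 0 < z) (hf : z ∈ feasibleValues b v M) :
    ⌈1 / b⌉₊ ≤ (M.filter (fun e => z ≤ w e)).card := by
  obtain ⟨-, lam, hnn, hsum, hsupp, hcap⟩ := hf
  rw [Nat.ceil_le, div_le_iff₀ hb0]
  set T := M.filter (fun e => z ≤ w e) with hT
  calc (1 : ℝ) = ∑ S ∈ M.powerset, lam S := hsum.symm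
    _ ≤ ∑ S ∈ M.powerset, ∑ e ∈ T, if e ∈ S then lam S else 0 := by
        refine Finset.sum_le_sum fun S hS => ?_
        have hterm : ∀ e ∈ T, 0 ≤ if e ∈ S then lam S else 0 := by
          intro e _
          split_ifs
          · exact hnn S
          · exact le_rfl
        by_cases hlt : v S < z
        · rw [hsupp S hS hlt]
          simp
        · rw [not_lt] at hlt
          have hne : S.Nonempty := by
            rw [Finset.nonempty_iff_ne_empty]
            rintro rfl
            linarith
          obtain ⟨e, heS, he⟩ := Finset.exists_mem_eq_sup' hne w
          have heT : e ∈ T := by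
            rw [hT, Finset.mem_filter]
            exact ⟨Finset.mem_powerset.mp hS heS, by rwa [← he, ← hv S hne]⟩
          have := Finset.single_le_sum hterm heT
          rwa [if_pos heS] at this
    _ = ∑ e ∈ T, ∑ S ∈ M.powerset.filter (fun S => e ∈ S), lam S := by
        rw [Finset.sum_comm]
        simp_rw [Finset.sum_filter]
    _ ≤ ∑ e ∈ T, b := Finset.sum_le_sum fun e he => hcap e (Finset.mem_filter.mp he).1
    _ = T.card * b := by simp

theorem feasible_of_card {ι : Type*} [DecidableEq ι] (M : Finset ι)
    (w : ι → ℝ) (v : Finset ι → ℝ)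
    (hv : ∀ (S : Finset ι) (hS : S.Nonempty), v S = S.sup' hS w)
    (b : ℝ) (hb0 : 0 < b) {z : ℝ} (hz : 0 ≤ z)
    (hc : ⌈1 / b⌉₊ ≤ (M.filter (fun e => z ≤ w e)).card) : z ∈ feasibleValues b v M := by
  obtain ⟨T, hTsub, hTcard⟩ := Finset.exists_subset_card_eq hc
  have hkpos : (0 : ℝ) < T.card := by
    rw [hTcard]
    exact_mod_cast Nat.ceil_pos.mpr (one_div_pos.mpr hb0)
  have hkb : 1 / (T.card : ℝ) ≤ b := by
    rw [one_div_le hkpos hb0, hTcard]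
    exact Nat.le_ceil _
  have hTM : ∀ e ∈ T, e ∈ M := fun e he => (Finset.mem_filter.mp (hTsub he)).1
  -- The weight on `S` counts the items of `T` whose singleton is `S`.
  refine ⟨hz, fun S => ∑ e ∈ T, if S = {e} then 1 / (T.card : ℝ) else 0, ?_, ?_, ?_, ?_⟩
  · intro S
    refine Finset.sum_nonneg fun e _ => ?_
    split_ifs <;> positivity
  · rw [Finset.sum_comm]
    have h : ∀ e ∈ T, (∑ S ∈ M.powerset, if S = {e} then 1 / (T.card : ℝ) else 0)
        = 1 / (T.card : ℝ) := by
      intro e he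
      rw [Finset.sum_ite_eq', if_pos (by simpa using hTM e he)]
    rw [Finset.sum_congr rfl h, Finset.sum_const, nsmul_eq_mul]
    field_simp
  · intro S _ hlt
    refine Finset.sum_eq_zero fun e he => if_neg ?_
    rintro rfl
    rw [hv _ (Finset.singleton_nonempty e), Finset.sup'_singleton] at hlt
    exact absurd (Finset.mem_filter.mp (hTsub he)).2 (not_le.mpr hlt)
  · intro e _
    rw [Finset.sum_comm]
    have h : ∀ f ∈ T, (∑ S ∈ M.powerset.filter (fun S => e ∈ S),
        if S = {f} then 1 / (T.card : ℝ) else 0) = if e = f then 1 / (T.card : ℝ) else 0 := by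
      intro f hf
      rw [Finset.sum_ite_eq']
      simp [hTM f hf]
    rw [Finset.sum_congr rfl h, Finset.sum_ite_eq]
    split_ifs
    · exact hkb
    · exact hb0.le

theorem le_getElem_iff_countP {L : List ℝ} (hL : L.Pairwise (· ≤ ·)) {i : ℕ} (hi : i < L.length)
    (z : ℝ) : z ≤ L[i] ↔ L.length - i ≤ L.countP (fun x => decide (z ≤ x)) := by
  have hmono : ∀ (a c : ℕ) (ha : a < L.length) (hc : c < L.length), a ≤ c → L[a] ≤ L[c] := by
    intro a c ha hc hac
    rcases hac.eq_or_lt with rfl | h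
    · exact le_rfl
    · exact List.pairwise_iff_getElem.mp hL a c ha hc h
  constructor
  · intro h
    have hall : (L.drop i).countP (fun x => decide (z ≤ x)) = (L.drop i).length := by
      rw [List.countP_eq_length]
      intro x hx
      obtain ⟨j, hj, rfl⟩ := List.mem_iff_getElem.mp hx
      rw [List.getElem_drop]
      rw [List.length_drop] at hj
      exact decide_eq_true (h.trans (hmono _ _ hi (by omega) (by omega)))
    rw [← List.length_drop, ← hall]
    exact (List.drop_sublist i L).countP_le
  · intro h
    by_contra! hlt
    have hnone : (L.take (i + 1)).countP (fun x => decide (z ≤ x)) = 0 := by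
      rw [List.countP_eq_zero]
      intro x hx
      obtain ⟨j, hj, rfl⟩ := List.mem_iff_getElem.mp hx
      rw [List.getElem_take]
      rw [List.length_take] at hj
      have := hmono j i (by omega) hi (by omega)
      simpa using this.trans_lt hlt
    have hsplit : L.countP (fun x => decide (z ≤ x)) ≤ L.length - (i + 1) := by
      conv_lhs => rw [← List.take_append_drop (i + 1) L]
      rw [List.countP_append, hnone, zero_add, ← List.length_drop]
      exact List.countP_le_length
    omega

theorem le_kth_largest_iff {ι : Type*} (M : Finset ι) (w : ι → ℝ) {k : ℕ}
    (hk : 0 < k) (hkM : k ≤ M.card) (z : ℝ) :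
    z ≤ ((M.val.map w).sort (· ≤ ·)).getD (M.card - k) 0 ↔
      k ≤ (M.filter (fun e => z ≤ w e)).card := by
  have hlen : ((M.val.map w).sort (· ≤ ·)).length = M.card := by simp
  have hi : M.card - k < ((M.val.map w).sort (· ≤ ·)).length := by omega
  have hcount : ((M.val.map w).sort (· ≤ ·)).countP (fun x => decide (z ≤ x))
      = (M.filter (fun e => z ≤ w e)).card := by
    rw [← Multiset.coe_countP, Multiset.sort_eq, Multiset.countP_map]
    rfl
  rw [List.getD_eq_getElem _ _ hi, le_getElem_iff_countP (Multiset.pairwise_sort _ _) hi, hcount,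
    hlen, Nat.sub_sub_self hkM]

/-- The APS of a unit-demand agent with entitlement `b` is the `k`-th largest
item value (with multiplicity), where `k = ⌈1/b⌉`, provided there are at least
`k` items; otherwise it is `0`.  The `k`-th largest value is expressed as entry
`|M| - k` (0-indexed) of the list of item values sorted in increasing order. -/
theorem APS_unitDemand
    {ι : Type*} [DecidableEq ι] (M : Finset ι)
    (w : ι → ℝ) (hw : ∀ e, 0 ≤ w e)
    (v : Finset ι → ℝ) (hv0 : v ∅ = 0)
    (hv : ∀ (S : Finset ι) (hS : S.Nonempty), v S = S.sup' hS w)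
    (b : ℝ) (hb0 : 0 < b) (hb1 : b ≤ 1) (k : ℕ) (hk : k = ⌈1 / b⌉₊) :
    (k ≤ M.card →
      APS b v M = ((M.val.map w).sort (· ≤ ·)).getD (M.card - k) 0) ∧
    (M.card < k → APS b v M = 0) := by
  have hkpos : 0 < k := by
    rw [hk]
    exact Nat.ceil_pos.mpr (one_div_pos.mpr hb0)
  constructor
  · intro hkM
    have hiff := le_kth_largest_iff M w hkpos hkM
    have hx0 : 0 ≤ ((M.val.map w).sort (· ≤ ·)).getD (M.card - k) 0 := by
      rw [hiff, Finset.filter_true_of_mem fun e _ => hw e]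
      exact hkM
    refine IsGreatest.csSup_eq (s := feasibleValues b v M) ⟨?_, ?_⟩
    · exact feasible_of_card M w v hv b hb0 hx0 (hk ▸ (hiff _).mp le_rfl)
    · intro z hz
      rcases hz.1.eq_or_lt with h | h
      · rwa [← h]
      · rw [hiff, hk]
        exact card_le_of_feasible M w v hv0 hv b hb0 h hz
  · intro hMk
    have hvnn : ∀ S, 0 ≤ v S := by
      intro S
      rcases S.eq_empty_or_nonempty with rfl | hS
      · exact hv0.ge
      · rw [hv S hS]
        obtain ⟨e, he⟩ := hS
        exact (hw e).trans (Finset.le_sup' w he)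
    refine IsGreatest.csSup_eq (s := feasibleValues b v M) ⟨zero_feasible M v hvnn b hb0, ?_⟩
    intro z hz
    by_contra! h
    have h1 := card_le_of_feasible M w v hv0 hv b hb0 h hz
    have h2 := Finset.card_filter_le M (fun e => z ≤ w e)
    omega
end
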